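/- Let M be an infinite matrix with no vanishing columns and p ≥ 1. The standard unit vectors e_n (with 1 in position n and 0 elsewhere) form an unconditional Schauder basis of (ℓ^p_M, ‖·‖_{M,p}). In particular, for every x ∈ ℓ^p_M the truncations x^N (setting coordinates beyond N to zero) converge to x in the norm ‖·‖_{M,p}. -/

import Mathlib

open scoped ENNReal NNReal

noncomputable def eNorm (m : ℕ → ℕ → ℂ) (p : ℝ) (x : ℕ → ℂ) : ℝ≥0∞ :=
  (∑' n : ℕ, (∑' k : ℕ, (‖m n k‖₊ : ℝ≥0∞) * (‖x k‖₊ : ℝ≥0∞)) ^ p) ^ (1 / p)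

/-- The standard unit vector `e_i`. -/
noncomputable def unitVec (i : ℕ) : ℕ → ℂ := Pi.single i 1

/-!
The tail `x - ∑ k ∈ s, x k • e k` has coordinates dominated by those of `x`, each vanishing once
`s` contains its index. As `‖x‖_{M,p}` is a sum of powers of sums, dominated convergence, first
along each row of `M` and then over the rows, makes the norms of the tails converge to zero along
the finite sets `s`, hence along every enumeration of `ℕ`. Conversely `|m n k| |y k| ≤ ‖y‖_{M,p}`,
so a nonvanishing column `k` makes the `k`-th coordinate continuous, and this determines the
coefficients.
-/

open Filter Topology

theorem tendsto_tsum_ennreal_of_dominated {ι β : Type*} {l : Filter ι} [l.IsCountablyGenerated]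
    {F : ι → β → ℝ≥0∞} {f bound : β → ℝ≥0∞} (h_sum : ∑' k, bound k ≠ ∞)
    (h_lim : ∀ k, Tendsto (F · k) l (𝓝 (f k))) (h_bound : ∀ᶠ i in l, ∀ k, F i k ≤ bound k) :
    Tendsto (fun i => ∑' k, F i k) l (𝓝 (∑' k, f k)) := by
  let _ : MeasurableSpace β := ⊤
  simp only [← MeasureTheory.lintegral_count] at h_sum ⊢
  exact MeasureTheory.tendsto_lintegral_filter_of_dominated_convergence bound
    (.of_forall fun _ => measurable_from_top) (h_bound.mono fun _ h => .of_forall h) h_sum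
    (.of_forall h_lim)

theorem tendsto_map_range_atTop {β : Type*} (σ : ℕ ≃ β) :
    Tendsto (fun N => (Finset.range N).map σ.toEmbedding) atTop atTop := by
  refine tendsto_atTop_finset_of_monotone
    (fun _ _ h => Finset.map_subset_map.2 (Finset.range_subset_range.2 h))
    fun b => ⟨σ.symm b + 1, ?_⟩
  simp

theorem sum_smul_unitVec_eq_indicator (a : ℕ → ℂ) (s : Finset ℕ) :
    ∑ k ∈ s, a k • unitVec k = (s : Set ℕ).indicator a := by
  ext j
  simp [unitVec, Set.indicator_apply, Pi.single_apply]

/-- The `n`-th entry of `|M| |x|`, so that `‖x‖_{M,p}` is the `ℓ^p` norm of `rowSum m x`. -/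
noncomputable def rowSum (m : ℕ → ℕ → ℂ) (x : ℕ → ℂ) (n : ℕ) : ℝ≥0∞ :=
  ∑' k, ‖m n k‖ₑ * ‖x k‖ₑ

section

variable {m : ℕ → ℕ → ℂ} {p : ℝ} {x : ℕ → ℂ} {ι : Type*} {l : Filter ι} {y : ι → ℕ → ℂ}

theorem eNorm_eq_tsum_rowSum (m : ℕ → ℕ → ℂ) (p : ℝ) (x : ℕ → ℂ) :
    eNorm m p x = (∑' n, rowSum m x n ^ p) ^ (1 / p) :=
  rfl

theorem rowSum_mono {z : ℕ → ℂ} (h : ∀ k, ‖z k‖ₑ ≤ ‖x k‖ₑ) (n : ℕ) :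
    rowSum m z n ≤ rowSum m x n :=
  ENNReal.tsum_le_tsum fun k => mul_le_mul_right (h k) _

theorem enorm_mul_le_rowSum (m : ℕ → ℕ → ℂ) (x : ℕ → ℂ) (n k : ℕ) :
    ‖m n k * x k‖ₑ ≤ rowSum m x n := by
  rw [enorm_mul]
  exact ENNReal.le_tsum (f := fun k => ‖m n k‖ₑ * ‖x k‖ₑ) k

theorem rowSum_le_eNorm (hp : 0 < p) (m : ℕ → ℕ → ℂ) (x : ℕ → ℂ) (n : ℕ) :
    rowSum m x n ≤ eNorm m p x := by
  rw [eNorm_eq_tsum_rowSum, one_div, ENNReal.le_rpow_inv_iff hp]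
  exact ENNReal.le_tsum (f := fun n => rowSum m x n ^ p) n

theorem tsum_rowSum_rpow_ne_top (hp : 0 < p) (hx : eNorm m p x ≠ ∞) :
    ∑' n, rowSum m x n ^ p ≠ ∞ := by
  rw [eNorm_eq_tsum_rowSum] at hx
  exact fun h => hx (h ▸ ENNReal.top_rpow_of_pos (one_div_pos.2 hp))

theorem tendsto_rowSum_zero_of_dominated [l.IsCountablyGenerated] {n : ℕ}
    (hx : rowSum m x n ≠ ∞) (h_lim : ∀ k, Tendsto (y · k) l (𝓝 0))
    (h_bound : ∀ᶠ i in l, ∀ k, ‖y i k‖ₑ ≤ ‖x k‖ₑ) :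
    Tendsto (fun i => rowSum m (y i) n) l (𝓝 0) := by
  have h_entry (k : ℕ) : Tendsto (fun i => ‖m n k‖ₑ * ‖y i k‖ₑ) l (𝓝 0) := by
    simpa using ENNReal.Tendsto.const_mul (h_lim k).enorm (.inr enorm_ne_top)
  simpa [rowSum] using tendsto_tsum_ennreal_of_dominated hx h_entry
    (h_bound.mono fun i h k => mul_le_mul_right (h k) _)

theorem tendsto_eNorm_zero_of_dominated [l.IsCountablyGenerated] (hp : 0 < p)
    (hx : eNorm m p x ≠ ∞) (h_lim : ∀ k, Tendsto (y · k) l (𝓝 0))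
    (h_bound : ∀ᶠ i in l, ∀ k, ‖y i k‖ₑ ≤ ‖x k‖ₑ) :
    Tendsto (fun i => eNorm m p (y i)) l (𝓝 0) := by
  have h_row (n : ℕ) : Tendsto (fun i => rowSum m (y i) n ^ p) l (𝓝 0) := by
    have hx_row : rowSum m x n ≠ ∞ := ne_top_of_le_ne_top hx (rowSum_le_eNorm hp m x n)
    simpa [ENNReal.zero_rpow_of_pos hp] using
      (tendsto_rowSum_zero_of_dominated hx_row h_lim h_bound).ennrpow_const p
  have h_sum : Tendsto (fun i => ∑' n, rowSum m (y i) n ^ p) l (𝓝 0) := by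
    simpa using tendsto_tsum_ennreal_of_dominated (tsum_rowSum_rpow_ne_top hp hx) h_row
      (h_bound.mono fun i h n => ENNReal.rpow_le_rpow (rowSum_mono h n) hp.le)
  simpa [eNorm_eq_tsum_rowSum, hp] using h_sum.ennrpow_const (1 / p)

theorem tendsto_apply_zero_of_tendsto_eNorm_zero (hp : 0 < p)
    (hy : Tendsto (fun i => eNorm m p (y i)) l (𝓝 0)) {k : ℕ} (hk : ∃ n, m n k ≠ 0) :
    Tendsto (y · k) l (𝓝 0) := by
  obtain ⟨n, hn⟩ := hk
  have h_mul : Tendsto (fun i => m n k * y i k) l (𝓝 0) :=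
    tendsto_zero_iff_enorm_tendsto_zero.2 <| tendsto_of_tendsto_of_tendsto_of_le_of_le
      tendsto_const_nhds hy (fun _ => zero_le)
      fun i => (enorm_mul_le_rowSum m (y i) n k).trans (rowSum_le_eNorm hp m (y i) n)
  simpa [hn] using h_mul.const_mul (m n k)⁻¹

theorem tendsto_eNorm_sub_sum_smul_unitVec (hp : 0 < p) (hx : eNorm m p x ≠ ∞) :
    Tendsto (fun s : Finset ℕ => eNorm m p (x - ∑ k ∈ s, x k • unitVec k)) atTop (𝓝 0) := by
  simp only [sum_smul_unitVec_eq_indicator, ← Set.indicator_compl]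
  refine tendsto_eNorm_zero_of_dominated hp hx (fun k => ?_)
    (.of_forall fun s k => enorm_indicator_le_enorm_self x k)
  refine tendsto_const_nhds.congr' ?_
  filter_upwards [eventually_ge_atTop {k}] with s hs
  have hk : k ∈ s := Finset.singleton_subset_iff.1 hs
  simp [hk]

theorem eq_of_tendsto_eNorm_sub_sum_smul_unitVec [l.NeBot] (hp : 0 < p)
    (hcol : ∀ k, ∃ n, m n k ≠ 0) {s : ι → Finset ℕ} (hs : Tendsto s l atTop) {a : ℕ → ℂ}
    (ha : Tendsto (fun i => eNorm m p (x - ∑ k ∈ s i, a k • unitVec k)) l (𝓝 0)) :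
    a = x := by
  ext k
  have h_zero := tendsto_apply_zero_of_tendsto_eNorm_zero hp ha (hcol k)
  have h_const : ∀ᶠ i in l, x k - a k = (x - ∑ j ∈ s i, a j • unitVec j) k := by
    filter_upwards [hs.eventually_ge_atTop {k}] with i hi
    have hk : k ∈ s i := Finset.singleton_subset_iff.1 hi
    simp [sum_smul_unitVec_eq_indicator, hk]
  have h_sub : x k - a k = 0 :=
    tendsto_nhds_unique (tendsto_const_nhds.congr' h_const) h_zero
  exact (sub_eq_zero.1 h_sub).symm

end

theorem stmt5_general (m : ℕ → ℕ → ℂ) (p : ℝ) (hp : 0 < p)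
    (hcol : ∀ k : ℕ, ∃ n : ℕ, m n k ≠ 0)
    (x : ℕ → ℂ) (hx : eNorm m p x < ∞) :
    (∀ σ : Equiv.Perm ℕ,
      Tendsto (fun N : ℕ => eNorm m p (x - ∑ k ∈ Finset.range N, x (σ k) • unitVec (σ k)))
        atTop (𝓝 0)) ∧
    (∀ a : ℕ → ℂ,
      Tendsto (fun N : ℕ => eNorm m p (x - ∑ k ∈ Finset.range N, a k • unitVec k))
        atTop (𝓝 0) → a = x) ∧
    Tendsto (fun N : ℕ => eNorm m p (x - fun k => if k < N then x k else 0)) atTop (𝓝 0) := by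
  have h_uncond := tendsto_eNorm_sub_sum_smul_unitVec hp hx.ne
  refine ⟨fun σ => ?_, fun _ => ?_, ?_⟩
  · simpa [Function.comp_def] using h_uncond.comp (tendsto_map_range_atTop σ)
  · exact eq_of_tendsto_eNorm_sub_sum_smul_unitVec hp hcol tendsto_finset_range
  · have h_trunc (N : ℕ) :
        ∑ k ∈ Finset.range N, x k • unitVec k = fun k => if k < N then x k else 0 := by
      rw [sum_smul_unitVec_eq_indicator]
      ext k
      simp [Set.indicator_apply]
    simpa only [Function.comp_def, h_trunc] using h_uncond.comp tendsto_finset_range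

/-- The unit vectors form an unconditional Schauder basis of `ℓ^p_M`: for every
`x ∈ ℓ^p_M` and every permutation `σ` of `ℕ`, the partial sums
`∑_{k<N} x_{σ(k)} e_{σ(k)}` converge to `x` in the norm `‖·‖_{M,p}`; the expansion
with these coefficients is unique. In particular (taking `σ = id`) the truncations
`x^N` converge to `x`. -/
theorem stmt5 (m : ℕ → ℕ → ℂ) (p : ℝ) (hp : 1 ≤ p)
    (hcol : ∀ k : ℕ, ∃ n : ℕ, m n k ≠ 0)
    (x : ℕ → ℂ) (hx : eNorm m p x < ∞) :
    (∀ σ : Equiv.Perm ℕ,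
      Filter.Tendsto
        (fun N : ℕ => eNorm m p (x - ∑ k ∈ Finset.range N, x (σ k) • unitVec (σ k)))
        Filter.atTop (nhds 0)) ∧
    (∀ a : ℕ → ℂ,
      Filter.Tendsto (fun N : ℕ => eNorm m p (x - ∑ k ∈ Finset.range N, a k • unitVec k))
        Filter.atTop (nhds 0) → a = x) ∧
    Filter.Tendsto
      (fun N : ℕ => eNorm m p (x - fun k => if k < N then x k else 0))
      Filter.atTop (nhds 0) :=
  stmt5_general m p (zero_lt_one.trans_le hp) hcol x hx
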